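/- In the AR identification setup, let Q be a 𝔊_{t−1}-measurable real-valued random variable such that (a) P(Q ≥ 0) = 1 or P(Q ≤ 0) = 1, and (b) Q is not almost surely equal to any constant. Then for every δ = (δ₁, δ₂, …, δ_{p+1}) ∈ ℝ^{p+1}, one has P(δ₁ + Σ_{j=1}^p δ_{j+1} y_{t−j} = Q) < 1. -/

import Mathlib

open MeasureTheory Set

/-- A real-valued random variable `ε` has *full conditional support* given a
sub-σ-algebra `m` if for every `m`-measurable set `A` of positive probability and
every nonempty open interval `(a, b)`, the event `A ∩ {ε ∈ (a, b)}` has positive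
probability. -/
def FullCondSupport {Ω : Type*} {mΩ : MeasurableSpace Ω} (P : Measure Ω)
    (m : MeasurableSpace Ω) (ε : Ω → ℝ) : Prop :=
  ∀ A : Set Ω, MeasurableSet[m] A → 0 < P A →
    ∀ a b : ℝ, a < b → 0 < P (A ∩ {ω | ε ω ∈ Set.Ioo a b})

/-!
If `ε` has full conditional support given `m`, then so does `V + d * ε` for `d ≠ 0` and
`V` measurable with respect to `m`: on a slice where `V` is nearly constant, hitting an interval
with `V + d * ε` reduces to hitting a shorter one with `ε`. In a linear combination of the lags of
`y` the most recent lag with a nonzero coefficient contributes such a `d * ε`, and everything older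
goes into `V`, so the combination charges every open interval. A one-signed `Q` does not, so
equality with `Q` would force all the coefficients to vanish and `Q` to be a.s. constant.
-/

theorem exists_measure_inter_preimage_ball_pos {α X : Type*} [MeasurableSpace α]
    [PseudoMetricSpace X] [TopologicalSpace.SeparableSpace X] {μ : Measure α} {s : Set α}
    (hs : 0 < μ s) (f : α → X) {r : ℝ} (hr : 0 < r) :
    ∃ x, 0 < μ (s ∩ f ⁻¹' Metric.ball x r) := by
  by_contra! hnull
  obtain ⟨t, ht_countable, ht_dense⟩ := TopologicalSpace.exists_countable_dense X
  have hcover : s ⊆ ⋃ x ∈ t, s ∩ f ⁻¹' Metric.ball x r := fun ω hω ↦ by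
    obtain ⟨x, hxt, hx⟩ := ht_dense.exists_dist_lt (f ω) hr
    exact mem_biUnion hxt ⟨hω, hx⟩
  exact hs.ne' <| measure_mono_null hcover <|
    (measure_biUnion_null_iff ht_countable).2 fun x _ ↦ nonpos_iff_eq_zero.1 (hnull x)

namespace FullCondSupport

variable {Ω : Type*} {m mΩ : MeasurableSpace Ω} {P : Measure Ω}
  {X Y V : Ω → ℝ}

theorem congr_ae (hX : FullCondSupport P m X) (hXY : X =ᵐ[P] Y) : FullCondSupport P m Y := by
  intro A hA hPA a b hab
  refine (hX A hA hPA a b hab).trans_eq (measure_congr ?_)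
  exact .inter .rfl (hXY.preimage (Ioo a b))

theorem measure_preimage_Ioo_pos [NeZero P] (hX : FullCondSupport P m X) {a b : ℝ}
    (hab : a < b) : 0 < P (X ⁻¹' Ioo a b) := by
  have hpos := hX univ .univ (Measure.measure_univ_pos.2 (NeZero.ne P)) a b hab
  rwa [univ_inter] at hpos

theorem const_mul (hX : FullCondSupport P m X) {d : ℝ} (hd : d ≠ 0) :
    FullCondSupport P m (fun ω ↦ d * X ω) := by
  intro A hA hPA a b hab
  change 0 < P (A ∩ X ⁻¹' ((d * ·) ⁻¹' Ioo a b))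
  rcases hd.lt_or_gt with hneg | hpos
  · rw [preimage_const_mul_Ioo_of_neg a b hneg]
    exact hX A hA hPA _ _ (div_lt_div_of_neg_of_lt hneg hab)
  · rw [preimage_const_mul_Ioo₀ a b hpos]
    exact hX A hA hPA _ _ (div_lt_div_of_pos_right hab hpos)

theorem add_left_of_measurable (hX : FullCondSupport P m X) (hV : Measurable[m] V) :
    FullCondSupport P m (fun ω ↦ V ω + X ω) := by
  intro A hA hPA a b hab
  obtain ⟨r, hr, hrab⟩ : ∃ r, 0 < r ∧ a + r < b - r := ⟨(b - a) / 4, by linarith, by linarith⟩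
  obtain ⟨v, hv⟩ := exists_measure_inter_preimage_ball_pos hPA V hr
  have hslice : MeasurableSet[m] (A ∩ V ⁻¹' Metric.ball v r) := hA.inter (hV measurableSet_ball)
  refine (hX _ hslice hv (a + r - v) (b - r - v) (by linarith)).trans_le (measure_mono ?_)
  rintro ω ⟨⟨hωA, hωV⟩, hωa, hωb⟩
  rw [mem_preimage, Real.ball_eq_Ioo] at hωV
  exact ⟨hωA, by linarith [hωV.1], by linarith [hωV.2]⟩

/-- The index is a lag: `Y i` is older than `Y j` when `j < i`, and `m j` is the information
available just before `Y j`. -/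
theorem exists_const_add_sum_mul {ι : Type*} [Fintype ι] [LinearOrder ι] {m : ι → MeasurableSpace Ω}
    {Y : ι → Ω → ℝ} (hY : ∀ j, FullCondSupport P (m j) (Y j))
    (hYm : ∀ j i, j < i → Measurable[m j] (Y i)) (c : ℝ) {δ : ι → ℝ} (hδ : δ ≠ 0) :
    ∃ j, FullCondSupport P (m j) (fun ω ↦ c + ∑ i, δ i * Y i ω) := by
  obtain ⟨j, hj, hmin⟩ := wellFounded_lt.has_min {j | δ j ≠ 0} (Function.ne_iff.1 hδ)
  have h_older : ∀ i ∈ Finset.univ.erase j, Measurable[m j] (fun ω ↦ δ i * Y i ω) := by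
    intro i hi
    rcases (Finset.ne_of_mem_erase hi).lt_or_gt with hij | hji
    · have hδi : δ i = 0 := not_not.1 fun hne ↦ hmin i hne hij
      simp only [hδi, zero_mul, measurable_const]
    · exact (hYm j i hji).const_mul (δ i)
  have hsplit : (fun ω ↦ c + ∑ i, δ i * Y i ω) =
      fun ω ↦ (c + ∑ i ∈ Finset.univ.erase j, δ i * Y i ω) + δ j * Y j ω := by
    ext ω
    rw [add_assoc, Finset.sum_erase_add _ _ (Finset.mem_univ j)]
  refine ⟨j, ?_⟩
  rw [hsplit]
  exact ((hY j).const_mul hj).add_left_of_measurable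
    (measurable_const.add (Finset.measurable_fun_sum _ h_older))

end FullCondSupport

theorem stmt_4_general {Ω : Type*} [inst : MeasurableSpace Ω] (P : Measure Ω)
    [IsProbabilityMeasure P] (p : ℕ) (t : ℤ)
    (𝔊 : ℤ → MeasurableSpace Ω) (h𝔊mono : Monotone 𝔊) (h𝔊le : ∀ s : ℤ, 𝔊 s ≤ inst)
    (y W ε : ℤ → Ω → ℝ)
    (hdecomp : ∀ s : ℤ, t - p ≤ s → s ≤ t - 1 → ∀ ω, y s ω = W s ω + ε s ω)
    (hy : ∀ s : ℤ, t - p ≤ s → s ≤ t - 1 → Measurable[𝔊 s] (y s))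
    (hW : ∀ s : ℤ, t - p ≤ s → s ≤ t - 1 → Measurable[𝔊 (s - 1)] (W s))
    (hε : ∀ s : ℤ, t - p ≤ s → s ≤ t - 1 → FullCondSupport P (𝔊 (s - 1)) (ε s))
    (Q : Ω → ℝ) (hQ : AEMeasurable Q P)
    (hQgap : ∃ a b : ℝ, a < b ∧ P (Q ⁻¹' Ioo a b) = 0)
    (hQnondeg : ∀ c : ℝ, P {ω | Q ω = c} < 1) (δ₁ : ℝ) (δ : Fin p → ℝ) :
    P {ω | δ₁ + ∑ j : Fin p, δ j * y (t - 1 - (j : ℕ)) ω = Q ω} < 1 := by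
  have hlag (j : Fin p) : t - p ≤ t - 1 - (j : ℕ) ∧ t - 1 - (j : ℕ) ≤ t - 1 := by omega
  have hlag_support (j : Fin p) :
      FullCondSupport P (𝔊 (t - 1 - (j : ℕ) - 1)) (y (t - 1 - (j : ℕ))) := by
    obtain ⟨hlo, hhi⟩ := hlag j
    rw [funext (hdecomp _ hlo hhi)]
    exact (hε _ hlo hhi).add_left_of_measurable (hW _ hlo hhi)
  have hlag_older (j i : Fin p) (hji : j < i) :
      Measurable[𝔊 (t - 1 - (j : ℕ) - 1)] (y (t - 1 - (i : ℕ))) :=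
    (hy _ (hlag i).1 (hlag i).2).mono (h𝔊mono (by omega)) le_rfl
  have hsum : Measurable fun ω ↦ δ₁ + ∑ j : Fin p, δ j * y (t - 1 - (j : ℕ)) ω :=
    measurable_const.add <| Finset.measurable_fun_sum _ fun j _ ↦
      ((hy _ (hlag j).1 (hlag j).2).mono (h𝔊le _) le_rfl).const_mul (δ j)
  refine prob_le_one.lt_of_ne fun hprob ↦ ?_
  have hae : (fun ω ↦ δ₁ + ∑ j : Fin p, δ j * y (t - 1 - (j : ℕ)) ω) =ᵐ[P] Q :=
    (mem_ae_iff_prob_eq_one₀ (nullMeasurableSet_eq_fun hsum.aemeasurable hQ)).2 hprob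
  rcases eq_or_ne δ 0 with rfl | hδ
  · simp only [Pi.zero_apply, zero_mul, Finset.sum_const_zero, add_zero] at hae
    refine (hQnondeg δ₁).ne ?_
    exact (mem_ae_iff_prob_eq_one₀ (nullMeasurableSet_eq_fun hQ aemeasurable_const)).1 hae.symm
  · obtain ⟨j, hj⟩ := FullCondSupport.exists_const_add_sum_mul hlag_support hlag_older δ₁ hδ
    obtain ⟨a, b, hab, hnull⟩ := hQgap
    exact ((hj.congr_ae hae).measure_preimage_Ioo_pos hab).ne' hnull

/-- AR identification setup: in the filtration `𝔊`, each `y s = W s + ε s`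
(`s = t-p, …, t-1`) with `y s` being `𝔊 s`-measurable, `W s` being
`𝔊 (s-1)`-measurable, and `ε s` having full conditional support given `𝔊 (s-1)`.
If `Q` is `𝔊 (t-1)`-measurable, one-signed almost surely, and not a.s. constant,
then no linear combination `δ₁ + ∑_{j=1}^p δ_{j+1} y_{t-j}` can equal `Q` a.s. -/
theorem stmt_4 {Ω : Type*} [inst : MeasurableSpace Ω] (P : Measure Ω)
    [IsProbabilityMeasure P]
    (p : ℕ) (hp : 1 ≤ p) (t : ℤ)
    (𝔊 : ℤ → MeasurableSpace Ω)
    (h𝔊mono : Monotone 𝔊) (h𝔊le : ∀ s : ℤ, 𝔊 s ≤ inst)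
    (y W ε : ℤ → Ω → ℝ)
    (hdecomp : ∀ s : ℤ, t - p ≤ s → s ≤ t - 1 → ∀ ω, y s ω = W s ω + ε s ω)
    (hy : ∀ s : ℤ, t - p ≤ s → s ≤ t - 1 → Measurable[𝔊 s] (y s))
    (hW : ∀ s : ℤ, t - p ≤ s → s ≤ t - 1 → Measurable[𝔊 (s - 1)] (W s))
    (hε : ∀ s : ℤ, t - p ≤ s → s ≤ t - 1 → FullCondSupport P (𝔊 (s - 1)) (ε s))
    (Q : Ω → ℝ) (hQmeas : Measurable[𝔊 (t - 1)] Q)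
    (hQsign : P {ω | 0 ≤ Q ω} = 1 ∨ P {ω | Q ω ≤ 0} = 1)
    (hQnondeg : ∀ c : ℝ, P {ω | Q ω = c} < 1) :
    ∀ (δ₁ : ℝ) (δ : Fin p → ℝ),
      P {ω | δ₁ + ∑ j : Fin p, δ j * y (t - 1 - (j : ℕ)) ω = Q ω} < 1 := by
  have hQ : Measurable Q := hQmeas.mono (h𝔊le _) le_rfl
  refine stmt_4_general P p t 𝔊 h𝔊mono h𝔊le y W ε hdecomp hy hW hε Q hQ.aemeasurable ?_ hQnondeg
  rcases hQsign with hnonneg | hnonpos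
  · refine ⟨-1, 0, by norm_num, measure_mono_null (fun ω hω ↦ not_le.2 hω.2) ?_⟩
    exact (prob_compl_eq_zero_iff (measurableSet_le measurable_const hQ)).2 hnonneg
  · refine ⟨0, 1, by norm_num, measure_mono_null (fun ω hω ↦ not_le.2 hω.1) ?_⟩
    exact (prob_compl_eq_zero_iff (measurableSet_le hQ measurable_const)).2 hnonpos
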